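/- arXiv:2203.13163 — 3 statements merged into one kernel-verified Lean document; each statement's English description precedes it below -/
import Mathlib

section
/- Let H be a complex Hilbert space and let R be a map assigning to every z ∈ ℂ with Im z ≠ 0 a bounded linear operator R(z) on H such that: (i) R(z) is injective for every nonreal z; (ii) R(z)* = R(z̄) for every nonreal z; (iii) the Hilbert identity R(z₁) − R(z₂) = (z₁ − z₂)·R(z₁)R(z₂) holds for all nonreal z₁, z₂. Then there exists a densely defined self-adjoint operator A in H whose resolvent is R, i.e. for every nonreal z the operator R(z) maps H bijectively onto the domain of A, A(R(z)h) − z·R(z)h = h for every h ∈ H, and R(z)(Ax − z·x) = x for every x in the domain of A. -/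
open MeasureTheory Complex

/-!
If `A` has resolvent `T` at `z`, then `(x, y)` lies on the graph of `A` if and only if
`T (y - z • x) = x`, so `A` must be `T⁻¹ + z`. The Hilbert identity says precisely that this
condition on `(x, y)` does not depend on the point at which it is formed, so all the operators
`(R z)⁻¹ + z` are one and the same operator `A`. The adjoint of `T⁻¹ + z` is `(T†)⁻¹ + conj z`,
which for `T = R z` is `(R (conj z))⁻¹ + conj z`, that is, `A` again.
-/

section Algebraic

variable {𝕜 E : Type*} [CommRing 𝕜] [AddCommGroup E] [Module 𝕜 E]

/-- A pseudo-resolvent on `Ω`: a family of operators satisfying the Hilbert (first resolvent)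
identity on `Ω`. The values of `R` outside `Ω` are irrelevant. -/
def IsPseudoResolvent (R : 𝕜 → E →ₗ[𝕜] E) (Ω : Set 𝕜) : Prop :=
  ∀ z ∈ Ω, ∀ w ∈ Ω, R z - R w = (z - w) • R z ∘ₗ R w

/-- The partially defined operator `T⁻¹ + z` on the range of `T`, the only candidate for an operator
with resolvent `T` at the point `z`. It is meaningful only for injective `T`, since
`LinearPMap.inverse` takes junk values otherwise. -/
noncomputable def operatorOfResolvent (T : E →ₗ[𝕜] E) (z : 𝕜) : E →ₗ.[𝕜] E :=
  (z • LinearMap.id : E →ₗ[𝕜] E) +ᵥ (T.toPMap ⊤).inverse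

namespace IsPseudoResolvent

variable {R : 𝕜 → E →ₗ[𝕜] E} {Ω : Set 𝕜} {z w : 𝕜}

theorem apply_sub_apply (hR : IsPseudoResolvent R Ω) (hz : z ∈ Ω) (hw : w ∈ Ω) (h : E) :
    R z h - R w h = (z - w) • R z (R w h) :=
  LinearMap.congr_fun (hR z hz w hw) h

theorem ker_le_ker (hR : IsPseudoResolvent R Ω) (hz : z ∈ Ω) (hw : w ∈ Ω) :
    (R w).ker ≤ (R z).ker := by
  intro h hh
  rw [LinearMap.mem_ker] at hh ⊢
  simpa only [hh, map_zero, smul_zero, sub_zero] using hR.apply_sub_apply hz hw h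

theorem ker_eq_bot (hR : IsPseudoResolvent R Ω) (hz : z ∈ Ω) (hw : w ∈ Ω)
    (hker : (R w).ker = ⊥) : (R z).ker = ⊥ :=
  le_bot_iff.mp (hker ▸ hR.ker_le_ker hw hz)

theorem apply_sub_smul_eq (hR : IsPseudoResolvent R Ω) (hz : z ∈ Ω) (hw : w ∈ Ω) {x y : E}
    (hxy : R w (y - w • x) = x) : R z (y - z • x) = x := by
  have hilbert : R z (y - w • x) - x = (z - w) • R z x := by
    simpa only [hxy] using hR.apply_sub_apply hz hw (y - w • x)
  calc R z (y - z • x) = R z (y - w • x) - (z - w) • R z x := by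
        simp only [map_sub, map_smul]
        module
    _ = x := by rw [← hilbert, sub_sub_cancel]

end IsPseudoResolvent

section Operator

variable {T : E →ₗ[𝕜] E} {z : 𝕜}

theorem operatorOfResolvent_domain : (operatorOfResolvent T z).domain = T.range := by
  rw [operatorOfResolvent, LinearPMap.vadd_domain, LinearPMap.inverse_domain]
  exact (LinearMap.range_domRestrict ⊤ T).trans (Submodule.map_top T)

theorem operatorOfResolvent_apply_sub_smul (hT : T.ker = ⊥) (h : E)
    (hm : T h ∈ (operatorOfResolvent T z).domain) :
    operatorOfResolvent T z ⟨T h, hm⟩ - z • T h = h := by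
  have hker : (T.toPMap ⊤).toFun.ker = ⊥ :=
    LinearMap.ker_eq_bot.mpr ((LinearMap.ker_eq_bot.mp hT).comp Subtype.val_injective)
  have hinverse : (T.toPMap ⊤).inverse ⟨T h, hm⟩ = h :=
    LinearPMap.inverse_apply_eq hker (x := ⟨h, Submodule.mem_top⟩) rfl
  calc operatorOfResolvent T z ⟨T h, hm⟩ - z • T h
      = z • T h + (T.toPMap ⊤).inverse ⟨T h, hm⟩ - z • T h := rfl
    _ = h := by rw [hinverse, add_sub_cancel_left]

theorem apply_operatorOfResolvent_sub_smul (hT : T.ker = ⊥)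
    (x : (operatorOfResolvent T z).domain) :
    T (operatorOfResolvent T z x - z • (x : E)) = x := by
  obtain ⟨x, hx⟩ := x
  obtain ⟨h, rfl⟩ := operatorOfResolvent_domain.le hx
  rw [operatorOfResolvent_apply_sub_smul hT]

theorem mem_graph_operatorOfResolvent (hT : T.ker = ⊥) {x y : E} :
    (x, y) ∈ (operatorOfResolvent T z).graph ↔ T (y - z • x) = x := by
  rw [LinearPMap.mem_graph_iff]
  constructor
  · rintro ⟨x, rfl, rfl⟩
    exact apply_operatorOfResolvent_sub_smul hT x
  · intro hxy
    have hx : x ∈ (operatorOfResolvent T z).domain :=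
      operatorOfResolvent_domain.ge ⟨_, hxy⟩
    refine ⟨⟨x, hx⟩, rfl, ?_⟩
    have hvalue := apply_operatorOfResolvent_sub_smul hT ⟨x, hx⟩
    exact sub_left_injective (LinearMap.ker_eq_bot.mp hT (hvalue.trans hxy.symm))

end Operator

theorem IsPseudoResolvent.operatorOfResolvent_eq {R : 𝕜 → E →ₗ[𝕜] E} {Ω : Set 𝕜} {z w : 𝕜}
    (hR : IsPseudoResolvent R Ω) (hz : z ∈ Ω) (hw : w ∈ Ω) (hker : (R w).ker = ⊥) :
    operatorOfResolvent (R z) z = operatorOfResolvent (R w) w := by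
  refine LinearPMap.eq_of_eq_graph ?_
  ext ⟨x, y⟩
  rw [mem_graph_operatorOfResolvent (hR.ker_eq_bot hz hw hker), mem_graph_operatorOfResolvent hker]
  exact ⟨hR.apply_sub_smul_eq hw hz, hR.apply_sub_smul_eq hz hw⟩

end Algebraic

section Adjoint

open ContinuousLinearMap

variable {𝕜 H : Type*} [RCLike 𝕜] [NormedAddCommGroup H] [InnerProductSpace 𝕜 H] [CompleteSpace H]
  {T : H →L[𝕜] H} {z : 𝕜}

theorem dense_domain_operatorOfResolvent (hT' : (adjoint T).ker = ⊥) :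
    Dense ((operatorOfResolvent (T : H →ₗ[𝕜] H) z).domain : Set H) := by
  rw [operatorOfResolvent_domain, Submodule.dense_iff_topologicalClosure_eq_top,
    Submodule.topologicalClosure_eq_top_iff, T.orthogonal_range, hT']

theorem inner_sub_inner_of_apply_sub_smul_eq {a b : H} (hab : T (b - z • a) = a) (x y : H) :
    inner 𝕜 b x - inner 𝕜 a y =
      inner 𝕜 (b - z • a) (x - adjoint T (y - starRingEnd 𝕜 z • x)) := by
  rw [inner_sub_right _ x, adjoint_inner_right, hab]
  simp only [inner_sub_left, inner_sub_right, inner_smul_left, inner_smul_right]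
  ring

theorem adjoint_operatorOfResolvent (hT : T.ker = ⊥) (hT' : (adjoint T).ker = ⊥) :
    (operatorOfResolvent (T : H →ₗ[𝕜] H) z).adjoint =
      operatorOfResolvent (adjoint T : H →ₗ[𝕜] H) (starRingEnd 𝕜 z) := by
  refine LinearPMap.eq_of_eq_graph ?_
  ext ⟨x, y⟩
  rw [LinearPMap.adjoint_graph_eq_graph_adjoint (dense_domain_operatorOfResolvent hT'),
    Submodule.mem_adjoint_iff, mem_graph_operatorOfResolvent hT']
  simp only [mem_graph_operatorOfResolvent hT, coe_coe]
  constructor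
  · intro horth
    refine (ext_inner_left 𝕜 fun h => ?_).symm
    have hgraph : T (h + z • T h - z • T h) = T h := by rw [add_sub_cancel_right]
    have hpair := horth (T h) (h + z • T h) hgraph
    rwa [inner_sub_inner_of_apply_sub_smul_eq hgraph, add_sub_cancel_right, inner_sub_right,
      sub_eq_zero] at hpair
  · intro hxy a b hab
    rw [inner_sub_inner_of_apply_sub_smul_eq hab, hxy, sub_self, inner_zero_right]

end Adjoint

theorem stmt0_general {𝕜 H : Type*} [RCLike 𝕜] [NormedAddCommGroup H] [InnerProductSpace 𝕜 H]
    [CompleteSpace H] {Ω : Set 𝕜} {w : 𝕜} (hw : w ∈ Ω) (hw' : starRingEnd 𝕜 w ∈ Ω)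
    (R : 𝕜 → H →L[𝕜] H) (hinj : Function.Injective (R w))
    (hadj : ContinuousLinearMap.adjoint (R w) = R (starRingEnd 𝕜 w))
    (hres : ∀ z₁ ∈ Ω, ∀ z₂ ∈ Ω, R z₁ - R z₂ = (z₁ - z₂) • ((R z₁).comp (R z₂))) :
    ∃ A : H →ₗ.[𝕜] H, Dense (A.domain : Set H) ∧ A.adjoint = A ∧
      ∀ z ∈ Ω,
        Set.range (R z) = (A.domain : Set H) ∧
        (∀ (h : H) (hm : R z h ∈ A.domain), A ⟨R z h, hm⟩ - z • R z h = h) ∧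
        (∀ x : A.domain, R z (A x - z • (x : H)) = (x : H)) := by
  have hR : IsPseudoResolvent (fun z => (R z : H →ₗ[𝕜] H)) Ω := fun z hz w hw =>
    congrArg ContinuousLinearMap.toLinearMap (hres z hz w hw)
  have hker : (R w).ker = ⊥ := LinearMap.ker_eq_bot.mpr hinj
  have hker' : (ContinuousLinearMap.adjoint (R w)).ker = ⊥ :=
    hadj ▸ hR.ker_eq_bot hw' hw hker
  refine ⟨operatorOfResolvent (R w : H →ₗ[𝕜] H) w, dense_domain_operatorOfResolvent hker', ?_,
    fun z hz => ?_⟩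
  · rw [adjoint_operatorOfResolvent hker hker', hadj]
    exact hR.operatorOfResolvent_eq hw' hw hker
  · have hkerz : (R z).ker = ⊥ := hR.ker_eq_bot hz hw hker
    rw [← hR.operatorOfResolvent_eq hz hw hker]
    exact ⟨congrArg SetLike.coe operatorOfResolvent_domain.symm,
      operatorOfResolvent_apply_sub_smul hkerz, apply_operatorOfResolvent_sub_smul hkerz⟩

/-- If `R` assigns to every nonreal `z : ℂ` a bounded operator on a complex
Hilbert space `H` such that each `R z` is injective, `(R z)* = R z̄`, and the Hilbert
(first resolvent) identity `R z₁ - R z₂ = (z₁ - z₂) • (R z₁ ∘ R z₂)` holds, then `R` is the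
resolvent of a densely defined self-adjoint operator `A` in `H`: for every nonreal `z`,
`R z` maps `H` bijectively onto the domain of `A` (injectivity being hypothesis (i), the
surjectivity onto the domain is `Set.range (R z) = A.domain`), `A (R z h) - z • R z h = h`
for all `h`, and `R z (A x - z • x) = x` for all `x` in the domain of `A`. -/
theorem stmt0 {H : Type*} [NormedAddCommGroup H] [InnerProductSpace ℂ H] [CompleteSpace H]
    (R : ℂ → H →L[ℂ] H)
    (hinj : ∀ z : ℂ, z.im ≠ 0 → Function.Injective (R z))
    (hadj : ∀ z : ℂ, z.im ≠ 0 → ContinuousLinearMap.adjoint (R z) = R (starRingEnd ℂ z))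
    (hres : ∀ z₁ z₂ : ℂ, z₁.im ≠ 0 → z₂.im ≠ 0 →
      R z₁ - R z₂ = (z₁ - z₂) • ((R z₁).comp (R z₂))) :
    ∃ A : H →ₗ.[ℂ] H, Dense (A.domain : Set H) ∧ A.adjoint = A ∧
      ∀ z : ℂ, z.im ≠ 0 →
        Set.range (R z) = (A.domain : Set H) ∧
        (∀ (h : H) (hm : R z h ∈ A.domain), A ⟨R z h, hm⟩ - z • R z h = h) ∧
        (∀ x : A.domain, R z (A x - z • (x : H)) = (x : H)) := by
  have hconj : (starRingEnd ℂ I).im ≠ 0 := by simp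
  exact stmt0_general (Ω := {z : ℂ | z.im ≠ 0}) (w := I) (by simp) hconj R (hinj I (by simp))
    (hadj I (by simp)) fun z₁ h₁ z₂ h₂ => hres z₁ z₂ h₁ h₂
end

section
/- Let ζ ∈ ℂ with Im ζ > 0 and Re ζ ≠ 0, and let a, b ∈ ℝ³ with a ≠ b; set r = |a − b|. Then ∫_{ℝ³} g_{ζ,a}(x) · conj(g_{ζ,b}(x)) dx = (e^{iζr} − e^{−i·conj(ζ)·r}) / (4πr·(ζ² − conj(ζ)²)). -/
open MeasureTheory Complex Real

/-- The Green function `g_{ζ,a}(x) = e^{iζ|x-a|}/(4π|x-a|)` of the Helmholtz operator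
`-Δ - ζ²` in `ℝ³`. -/
noncomputable def greenFn (ζ : ℂ) (a x : EuclideanSpace ℝ (Fin 3)) : ℂ :=
  Complex.exp (Complex.I * ζ * (‖x - a‖ : ℝ)) / ((4 * Real.pi * ‖x - a‖ : ℝ) : ℂ)

/-!
In the coordinates `s = |x - a| + |x - b|`, `t = |x - a| - |x - b|` and the angle around the line
through `a` and `b`, Lebesgue measure is `(s² - t²) / (8r) ds dt dφ` on `s > r > |t|`. The weight
`s² - t² = 4 |x - a| |x - b|` cancels the denominators of two Green functions, so that
`∫ g_{ζ,a} g_{ω,b}` becomes the product of `∫_{s > r} e^{i(ζ + ω)s/2} ds` and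
`∫_{|t| < r} e^{i(ζ - ω)t/2} dt`. The theorem is the case `ω = -conj ζ`, because
`conj g_{ζ,b} = g_{-conj ζ,b}`.
-/

section SquaredNorm

open Set Module

theorem measure_ext_of_Iio {α : Type*} [TopologicalSpace α] {_ : MeasurableSpace α}
    [SecondCountableTopology α] [LinearOrder α] [OrderTopology α] [BorelSpace α] [NoMaxOrder α]
    {μ ν : Measure α} (hμ : ∀ c, μ (Iio c) ≠ ⊤) (h : ∀ c, μ (Iio c) = ν (Iio c)) : μ = ν := by
  refine Measure.ext_of_Ico' μ ν
    (fun p q _ => measure_ne_top_of_subset Ico_subset_Iio_self (hμ q)) fun p q hpq => ?_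
  have hsub : Iio p ⊆ Iio q := Iio_subset_Iio hpq.le
  have hdiff : Ico p q = Iio q \ Iio p := by
    rw [sdiff_eq, compl_Iio, inter_comm, Ici_inter_Iio]
  rw [hdiff, measure_sdiff hsub measurableSet_Iio.nullMeasurableSet (hμ p),
    measure_sdiff hsub measurableSet_Iio.nullMeasurableSet (h p ▸ hμ p), h p, h q]

theorem measurePreserving_norm_sq {F : Type*} [NormedAddCommGroup F] [InnerProductSpace ℝ F]
    [FiniteDimensional ℝ F] [MeasurableSpace F] [BorelSpace F] (hF : finrank ℝ F = 2) :
    MeasurePreserving (fun x : F => ‖x‖ ^ 2) volume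
      (ENNReal.ofReal π • volume.restrict (Ioi 0)) := by
  have hmeas : Measurable fun x : F => ‖x‖ ^ 2 := by fun_prop
  have : Nontrivial F := nontrivial_of_finrank_pos (R := ℝ) (by omega)
  have volume_sublevel (c : ℝ) : (volume : Measure F).map (fun x => ‖x‖ ^ 2) (Iio c) =
      ENNReal.ofReal π * ENNReal.ofReal c := by
    have hball : (fun x : F => ‖x‖ ^ 2) ⁻¹' Iio c = Metric.ball 0 √c := by
      ext x
      simp [Real.lt_sqrt (norm_nonneg x)]
    have hsqrt : ENNReal.ofReal √c ^ 2 = ENNReal.ofReal c := by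
      rw [← ENNReal.ofReal_pow (Real.sqrt_nonneg c)]
      rcases le_total 0 c with hc | hc
      · rw [Real.sq_sqrt hc]
      · simp [Real.sqrt_eq_zero_of_nonpos hc, ENNReal.ofReal_of_nonpos hc]
    rw [Measure.map_apply hmeas measurableSet_Iio, hball,
      InnerProductSpace.volume_ball_of_dim_even (k := 1) hF, hF, hsqrt, mul_comm]
    simp
  refine ⟨hmeas, measure_ext_of_Iio (fun c => ?_) fun c => ?_⟩
  · rw [volume_sublevel]
    exact ENNReal.mul_ne_top ENNReal.ofReal_ne_top ENNReal.ofReal_ne_top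
  · rw [volume_sublevel, Measure.smul_apply, Measure.restrict_apply measurableSet_Iio, inter_comm,
      Ioi_inter_Iio, Real.volume_Ioo, sub_zero, smul_eq_mul]

end SquaredNorm

section Cylindrical

open Set Module
open scoped RealInnerProductSpace

variable {E : Type*} [NormedAddCommGroup E] [InnerProductSpace ℝ E] {e : E}

/-- Cylindrical coordinates around the line spanned by the unit vector `e`, without the angle: the
height along `e` and the squared distance to the line. Squaring the distance makes the image of
Lebesgue measure on a three-dimensional space a constant multiple of Lebesgue measure. -/
noncomputable def cylindricalCoord (e x : E) : ℝ × ℝ := (⟪e, x⟫, ‖x‖ ^ 2 - ⟪e, x⟫ ^ 2)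

theorem norm_sub_smul_eq_sqrt_cylindricalCoord (he : ‖e‖ = 1) (x : E) (c : ℝ) :
    ‖x - c • e‖ = √(((cylindricalCoord e x).1 - c) ^ 2 + (cylindricalCoord e x).2) := by
  rw [← Real.sqrt_sq (norm_nonneg (x - c • e)), norm_sub_sq_real, norm_smul, he, inner_smul_right,
    real_inner_comm, mul_one, Real.norm_eq_abs, sq_abs, cylindricalCoord]
  ring_nf

variable [FiniteDimensional ℝ E] [MeasurableSpace E] [BorelSpace E]

theorem measurePreserving_inner_prodMk_orthogonalProjectionOnto (he : ‖e‖ = 1) :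
    MeasurePreserving fun x : E => (⟪e, x⟫, (ℝ ∙ e)ᗮ.orthogonalProjectionOnto x) := by
  have hline := (LinearIsometryEquiv.toSpanUnitSingleton (𝕜 := ℝ) e he).symm.measurePreserving
  have hsplit : MeasurePreserving fun x : E =>
      ((ℝ ∙ e).orthogonalProjectionOnto x, (ℝ ∙ e)ᗮ.orthogonalProjectionOnto x) := by
    convert! (WithLp.volume_preserving_ofLp _ _).comp
      (ℝ ∙ e).orthogonalDecomposition.measurePreserving using 2 with x
    simp only [Function.comp_apply, Submodule.orthogonalDecomposition_apply]
  convert! (hline.prod (MeasurePreserving.id volume)).comp hsplit using 2 with x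
  refine Prod.ext ((LinearIsometryEquiv.eq_symm_apply _).2 (Subtype.ext ?_)) rfl
  exact ((ℝ ∙ e).starProjection_apply x ▸ Submodule.starProjection_unit_singleton ℝ he x).symm

theorem measurePreserving_cylindricalCoord (hE : finrank ℝ E = 3) (he : ‖e‖ = 1) :
    MeasurePreserving (cylindricalCoord e) volume
      (ENNReal.ofReal π • volume.restrict (univ ×ˢ Ioi 0)) := by
  have : Fact (finrank ℝ E = 2 + 1) := ⟨hE⟩
  have he0 : e ≠ 0 := norm_ne_zero_iff.1 (by simp [he])
  have hradial := measurePreserving_norm_sq (Submodule.finrank_orthogonal_span_singleton he0)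
  convert! ((MeasurePreserving.id volume).prod hradial).comp
    (measurePreserving_inner_prodMk_orthogonalProjectionOnto he) using 1
  · ext x
    · rfl
    · have hpyth := (ℝ ∙ e).norm_sq_eq_add_norm_sq_projection x
      have hheight : ‖(ℝ ∙ e).orthogonalProjectionOnto x‖ ^ 2 = ⟪e, x⟫ ^ 2 := by
        rw [Submodule.coe_norm, ← Submodule.starProjection_apply,
          Submodule.starProjection_unit_singleton ℝ he, norm_smul, he, mul_one, norm_eq_abs, sq_abs]
      rw [hheight] at hpyth
      exact sub_eq_of_eq_add' hpyth
  · rw [Measure.prod_smul_right, Measure.volume_eq_prod, ← Measure.prod_restrict,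
      Measure.restrict_univ]

end Cylindrical

section Prolate

open Set

/-- The values taken, off the line through two points at distance `r`, by the sum `s` and the
difference `t` of the distances to these points. -/
def prolateRegion (r : ℝ) : Set (ℝ × ℝ) := Ioi r ×ˢ Ioo (-r) r

/-- The sum and the difference of the distances to the points `0` and `r • e`, in terms of the
cylindrical coordinates around `e`. -/
noncomputable def prolateOfCylindrical (r : ℝ) (q : ℝ × ℝ) : ℝ × ℝ :=
  (√(q.1 ^ 2 + q.2) + √((q.1 - r) ^ 2 + q.2), √(q.1 ^ 2 + q.2) - √((q.1 - r) ^ 2 + q.2))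

/-- The inverse of `prolateOfCylindrical r`, from `prolateRegion r` to the half-plane
`univ ×ˢ Ioi 0`. -/
noncomputable def cylindricalOfProlate (r : ℝ) (p : ℝ × ℝ) : ℝ × ℝ :=
  ((p.1 * p.2 + r ^ 2) / (2 * r), (p.1 ^ 2 - r ^ 2) * (r ^ 2 - p.2 ^ 2) / (4 * r ^ 2))

variable {r : ℝ}

theorem measurableSet_prolateRegion : MeasurableSet (prolateRegion r) :=
  measurableSet_Ioi.prod measurableSet_Ioo

theorem pos_of_mem_prolateRegion {p : ℝ × ℝ} (hp : p ∈ prolateRegion r) : 0 < r := by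
  linarith [hp.2.1, hp.2.2]

theorem sq_sub_sq_pos_of_mem_prolateRegion {p : ℝ × ℝ} (hp : p ∈ prolateRegion r) :
    0 < p.1 ^ 2 - p.2 ^ 2 := by
  obtain ⟨hs : r < p.1, ht₁ : -r < p.2, ht₂ : p.2 < r⟩ := hp
  rw [sq_sub_sq]
  exact mul_pos (by linarith) (by linarith)

theorem mapsTo_cylindricalOfProlate :
    MapsTo (cylindricalOfProlate r) (prolateRegion r) (univ ×ˢ Ioi 0) := by
  rintro ⟨s, t⟩ hp
  have hr := pos_of_mem_prolateRegion hp
  obtain ⟨hs : r < s, ht₁ : -r < t, ht₂ : t < r⟩ := hp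
  have hs' : 0 < s ^ 2 - r ^ 2 := by nlinarith
  have ht' : 0 < r ^ 2 - t ^ 2 := by nlinarith
  exact ⟨mem_univ _, by simp only [cylindricalOfProlate, mem_Ioi]; positivity⟩

theorem mapsTo_prolateOfCylindrical (hr : 0 < r) :
    MapsTo (prolateOfCylindrical r) (univ ×ˢ Ioi 0) (prolateRegion r) := by
  rintro ⟨z, u⟩ ⟨-, hu : 0 < u⟩
  have hA : √(z ^ 2 + u) ^ 2 = z ^ 2 + u := Real.sq_sqrt (by positivity)
  have hB : √((z - r) ^ 2 + u) ^ 2 = (z - r) ^ 2 + u := Real.sq_sqrt (by positivity)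
  have hzA : |z| < √(z ^ 2 + u) := Real.lt_sqrt_of_sq_lt (by rw [sq_abs]; linarith)
  have hzB : |z - r| < √((z - r) ^ 2 + u) := Real.lt_sqrt_of_sq_lt (by rw [sq_abs]; linarith)
  simp only [prolateOfCylindrical, prolateRegion, mem_prod, mem_Ioi, mem_Ioo]
  set A := √(z ^ 2 + u)
  set B := √((z - r) ^ 2 + u)
  obtain ⟨hzA₁, hzA₂⟩ := abs_lt.1 hzA
  obtain ⟨hzB₁, hzB₂⟩ := abs_lt.1 hzB
  have hBA : B < A + r := lt_of_pow_lt_pow_left₀ 2 (by linarith) (by nlinarith)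
  have hAB : A < B + r := lt_of_pow_lt_pow_left₀ 2 (by linarith) (by nlinarith)
  exact ⟨by linarith, by linarith, by linarith⟩

theorem leftInvOn_prolateOfCylindrical :
    LeftInvOn (prolateOfCylindrical r) (cylindricalOfProlate r) (prolateRegion r) := by
  rintro ⟨s, t⟩ hp
  have hr := pos_of_mem_prolateRegion hp
  obtain ⟨hs : r < s, ht₁ : -r < t, ht₂ : t < r⟩ := hp
  have hA : ((s * t + r ^ 2) / (2 * r)) ^ 2 +
      (s ^ 2 - r ^ 2) * (r ^ 2 - t ^ 2) / (4 * r ^ 2) = ((s + t) / 2) ^ 2 := by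
    field_simp
    ring
  have hB : ((s * t + r ^ 2) / (2 * r) - r) ^ 2 +
      (s ^ 2 - r ^ 2) * (r ^ 2 - t ^ 2) / (4 * r ^ 2) = ((s - t) / 2) ^ 2 := by
    field_simp
    ring
  simp only [prolateOfCylindrical, cylindricalOfProlate]
  rw [hA, hB, Real.sqrt_sq (by linarith), Real.sqrt_sq (by linarith)]
  ext <;> ring

theorem rightInvOn_prolateOfCylindrical (hr : r ≠ 0) :
    RightInvOn (prolateOfCylindrical r) (cylindricalOfProlate r) (univ ×ˢ Ioi 0) := by
  rintro ⟨z, u⟩ ⟨-, hu : 0 < u⟩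
  have hA : √(z ^ 2 + u) ^ 2 = z ^ 2 + u := Real.sq_sqrt (by positivity)
  have hB : √((z - r) ^ 2 + u) ^ 2 = (z - r) ^ 2 + u := Real.sq_sqrt (by positivity)
  simp only [cylindricalOfProlate, prolateOfCylindrical]
  set A := √(z ^ 2 + u)
  set B := √((z - r) ^ 2 + u)
  ext
  · rw [← sq_sub_sq, hA, hB]
    field_simp
    ring
  · have hprod : ((A + B) ^ 2 - r ^ 2) * (r ^ 2 - (A - B) ^ 2) =
        2 * r ^ 2 * (A ^ 2 + B ^ 2) - (A ^ 2 - B ^ 2) ^ 2 - r ^ 4 := by ring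
    rw [hprod, hA, hB]
    field_simp
    ring

theorem bijOn_cylindricalOfProlate (hr : 0 < r) :
    BijOn (cylindricalOfProlate r) (prolateRegion r) (univ ×ˢ Ioi 0) :=
  InvOn.bijOn ⟨leftInvOn_prolateOfCylindrical, rightInvOn_prolateOfCylindrical hr.ne'⟩
    mapsTo_cylindricalOfProlate (mapsTo_prolateOfCylindrical hr)

theorem exists_hasFDerivAt_cylindricalOfProlate (hr : r ≠ 0) (p : ℝ × ℝ) :
    ∃ D : ℝ × ℝ →L[ℝ] ℝ × ℝ, HasFDerivAt (cylindricalOfProlate r) D p ∧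
      D.det = -((p.1 ^ 2 - p.2 ^ 2) / (4 * r)) := by
  refine ⟨(Matrix.toLin (.finTwoProd ℝ) (.finTwoProd ℝ)
    !![p.2 / (2 * r), p.1 / (2 * r);
      p.1 * (r ^ 2 - p.2 ^ 2) / (2 * r ^ 2), -(p.2 * (p.1 ^ 2 - r ^ 2) / (2 * r ^ 2))]
    ).toContinuousLinearMap, ?_, ?_⟩
  · rw [Matrix.toLin_finTwoProd_toContinuousLinearMap]
    have hs : HasFDerivAt Prod.fst (ContinuousLinearMap.fst ℝ ℝ ℝ) p := hasFDerivAt_fst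
    have ht : HasFDerivAt Prod.snd (ContinuousLinearMap.snd ℝ ℝ ℝ) p := hasFDerivAt_snd
    have hz := ((hs.mul ht).add_const (r ^ 2)).mul_const (2 * r)⁻¹
    have hu := (((hs.pow 2).sub_const (r ^ 2)).mul ((ht.pow 2).const_sub (r ^ 2))).mul_const
      (4 * r ^ 2)⁻¹
    refine (hz.prodMk hu).congr_fderiv ?_
    ext <;> simp <;> ring
  · rw [ContinuousLinearMap.det, LinearMap.coe_toContinuousLinearMap, LinearMap.det_toLin,
      Matrix.det_fin_two_of]
    field_simp
    ring

theorem measurable_prolateOfCylindrical : Measurable (prolateOfCylindrical r) := by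
  unfold prolateOfCylindrical
  fun_prop

theorem map_prolateOfCylindrical_volume (hr : 0 < r) :
    ((volume : Measure (ℝ × ℝ)).restrict (univ ×ˢ Ioi 0)).map (prolateOfCylindrical r) =
      (volume.restrict (prolateRegion r)).withDensity
        fun p => ENNReal.ofReal ((p.1 ^ 2 - p.2 ^ 2) / (4 * r)) := by
  choose D hD hdet using exists_hasFDerivAt_cylindricalOfProlate hr.ne'
  have hdensity : ∀ p ∈ prolateRegion r, |(D p).det| = (p.1 ^ 2 - p.2 ^ 2) / (4 * r) :=
    fun p hp => by
      have hpos := sq_sub_sq_pos_of_mem_prolateRegion hp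
      rw [hdet, abs_neg, abs_of_pos (by positivity)]
  have hmeas : Measurable (cylindricalOfProlate r) := by
    unfold cylindricalOfProlate
    fun_prop
  have hcov := map_withDensity_abs_det_fderiv_eq_addHaar volume
    measurableSet_prolateRegion.nullMeasurableSet (fun p _ => (hD p).hasFDerivWithinAt)
    (bijOn_cylindricalOfProlate hr).injOn
  rw [withDensity_congr_ae <| (ae_restrict_mem measurableSet_prolateRegion).mono
    fun p hp => congrArg ENNReal.ofReal (hdensity p hp),
    (bijOn_cylindricalOfProlate hr).image_eq] at hcov
  rw [← hcov, Measure.map_map measurable_prolateOfCylindrical hmeas]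
  refine (Measure.map_congr ?_).trans Measure.map_id
  exact (withDensity_absolutelyContinuous _ _).ae_le <|
    (ae_restrict_mem measurableSet_prolateRegion).mono leftInvOn_prolateOfCylindrical

end Prolate

section TwoCentres

open Set Module

variable {E F : Type*} [NormedAddCommGroup E] [InnerProductSpace ℝ E] {a b : E}

/-- Prolate spheroidal coordinates with foci `a` and `b`, without the angle: the sum and the
difference of the distances to the foci. -/
noncomputable def prolateCoord (a b x : E) : ℝ × ℝ := (‖x - a‖ + ‖x - b‖, ‖x - a‖ - ‖x - b‖)

theorem exists_prolateCoord_eq_prolateOfCylindrical (hab : a ≠ b) :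
    ∃ e : E, ‖e‖ = 1 ∧ ∀ x, prolateCoord a b x =
      prolateOfCylindrical ‖a - b‖ (cylindricalCoord e (x - a)) := by
  have hba : b - a ≠ 0 := sub_ne_zero.2 hab.symm
  have he : ‖‖b - a‖⁻¹ • (b - a)‖ = 1 := norm_smul_inv_norm (𝕜 := ℝ) hba
  refine ⟨_, he, fun x => ?_⟩
  have hxa := norm_sub_smul_eq_sqrt_cylindricalCoord he (x - a) 0
  have hxb := norm_sub_smul_eq_sqrt_cylindricalCoord he (x - a) ‖a - b‖
  rw [zero_smul, sub_zero, sub_zero] at hxa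
  rw [norm_sub_rev a b, smul_inv_smul₀ (norm_ne_zero_iff.2 hba), sub_sub_sub_cancel_right] at hxb
  rw [prolateCoord, hxa, hxb, norm_sub_rev b a, prolateOfCylindrical]

variable [FiniteDimensional ℝ E] [MeasurableSpace E] [BorelSpace E]

theorem measurePreserving_prolateCoord (hE : finrank ℝ E = 3) (hab : a ≠ b) :
    MeasurePreserving (prolateCoord a b) volume
      (ENNReal.ofReal π • (volume.restrict (prolateRegion ‖a - b‖)).withDensity
        fun p => ENNReal.ofReal ((p.1 ^ 2 - p.2 ^ 2) / (4 * ‖a - b‖))) := by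
  obtain ⟨e, he, hcoord⟩ := exists_prolateCoord_eq_prolateOfCylindrical hab
  rw [← map_prolateOfCylindrical_volume (norm_pos_iff.2 (sub_ne_zero.2 hab)), ← Measure.map_smul,
    funext hcoord]
  exact (measurable_prolateOfCylindrical.measurePreserving _).comp <|
    (measurePreserving_cylindricalCoord hE he).comp (measurePreserving_sub_right volume a)

variable [NormedAddCommGroup F] [NormedSpace ℝ F]

theorem toReal_ofReal_sq_sub_sq_div_smul_ae_eq (r : ℝ) (f : ℝ × ℝ → F) :
    (fun p => (ENNReal.ofReal ((p.1 ^ 2 - p.2 ^ 2) / (4 * r))).toReal • f p)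
      =ᵐ[volume.restrict (prolateRegion r)]
        fun p => (4 * r)⁻¹ • ((p.1 ^ 2 - p.2 ^ 2) • f p) := by
  filter_upwards [ae_restrict_mem measurableSet_prolateRegion] with p hp
  have hr := pos_of_mem_prolateRegion hp
  have hpos := sq_sub_sq_pos_of_mem_prolateRegion hp
  rw [ENNReal.toReal_ofReal (by positivity), smul_smul, div_eq_inv_mul]

theorem integrable_comp_prolateCoord_iff (hE : finrank ℝ E = 3) (hab : a ≠ b)
    {f : ℝ × ℝ → F} (hf : StronglyMeasurable f) :
    Integrable (fun x => f (prolateCoord a b x)) ↔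
      IntegrableOn (fun p => (p.1 ^ 2 - p.2 ^ 2) • f p) (prolateRegion ‖a - b‖) := by
  have hr : ‖a - b‖ ≠ 0 := norm_ne_zero_iff.2 (sub_ne_zero.2 hab)
  have hπ : ENNReal.ofReal π ≠ 0 := (ENNReal.ofReal_pos.2 Real.pi_pos).ne'
  rw [← Function.comp_def, (measurePreserving_prolateCoord hE hab).integrable_comp
    hf.aestronglyMeasurable, integrable_smul_measure hπ ENNReal.ofReal_ne_top,
    integrable_withDensity_iff_integrable_smul' (by fun_prop) (by simp),
    integrable_congr (toReal_ofReal_sq_sub_sq_div_smul_ae_eq _ f)]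
  exact integrable_smul_iff (inv_ne_zero (mul_ne_zero four_ne_zero hr)) _

theorem integral_comp_prolateCoord (hE : finrank ℝ E = 3) (hab : a ≠ b)
    {f : ℝ × ℝ → F} (hf : StronglyMeasurable f) :
    ∫ x, f (prolateCoord a b x) =
      (π / (4 * ‖a - b‖)) • ∫ p in prolateRegion ‖a - b‖, (p.1 ^ 2 - p.2 ^ 2) • f p := by
  have hΨ := measurePreserving_prolateCoord hE hab
  rw [← integral_map hΨ.aemeasurable hf.aestronglyMeasurable, hΨ.map_eq, integral_smul_measure,
    integral_withDensity_eq_integral_toReal_smul (by fun_prop) (by simp),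
    integral_congr_ae (toReal_ofReal_sq_sub_sq_div_smul_ae_eq _ f), integral_smul,
    ENNReal.toReal_ofReal Real.pi_pos.le, smul_smul, div_eq_mul_inv]

end TwoCentres

section Exponentials

open Set

variable {α : ℂ}

theorem integrableOn_exp_mul_exp_prolateRegion (hα : α.re < 0) (β : ℂ) (r : ℝ) :
    IntegrableOn (fun p : ℝ × ℝ => Complex.exp (α * p.1) * Complex.exp (β * p.2))
      (prolateRegion r) := by
  have hs : IntegrableOn (fun s : ℝ => Complex.exp (α * s)) (Ioi r) :=
    integrableOn_exp_mul_complex_Ioi hα r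
  have ht : IntegrableOn (fun t : ℝ => Complex.exp (β * t)) (Ioo (-r) r) :=
    (Continuous.integrableOn_Icc (by fun_prop)).mono_set Ioo_subset_Icc_self
  rw [IntegrableOn, prolateRegion, Measure.volume_eq_prod, ← Measure.prod_restrict]
  exact hs.mul_prod ht

theorem integral_exp_mul_exp_prolateRegion (hα : α.re < 0) {β : ℂ} (hβ : β ≠ 0) {r : ℝ}
    (hr : 0 ≤ r) :
    ∫ p in prolateRegion r, Complex.exp (α * p.1) * Complex.exp (β * p.2) =
      -Complex.exp (α * r) / α * ((Complex.exp (β * r) - Complex.exp (-(β * r))) / β) := by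
  rw [prolateRegion, Measure.volume_eq_prod,
    setIntegral_prod_mul (fun s : ℝ => Complex.exp (α * s)) (fun t : ℝ => Complex.exp (β * t)),
    integral_exp_mul_complex_Ioi hα, ← integral_Ioc_eq_integral_Ioo,
    ← intervalIntegral.integral_of_le (by linarith), integral_exp_mul_complex hβ, ofReal_neg,
    mul_neg]

end Exponentials

section Green

variable {ζ ω : ℂ} {a b : EuclideanSpace ℝ (Fin 3)}

/-- The product `g_{ζ,a} g_{ω,b}` of two Green functions, in terms of the sum and the difference of
the distances to `a` and `b`. -/
noncomputable def prolateGreenProd (ζ ω : ℂ) (p : ℝ × ℝ) : ℂ :=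
  Complex.exp (I * (ζ + ω) / 2 * p.1) * Complex.exp (I * (ζ - ω) / 2 * p.2) /
    (4 * π ^ 2 * (p.1 ^ 2 - p.2 ^ 2))

theorem conj_greenFn (ζ : ℂ) (a x : EuclideanSpace ℝ (Fin 3)) :
    (starRingEnd ℂ) (greenFn ζ a x) = greenFn (-(starRingEnd ℂ) ζ) a x := by
  simp only [greenFn, map_div₀, ← Complex.exp_conj, map_mul, conj_I, conj_ofReal, mul_neg, neg_mul]

theorem greenFn_mul_greenFn (ζ ω : ℂ) (a b x : EuclideanSpace ℝ (Fin 3)) :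
    greenFn ζ a x * greenFn ω b x = prolateGreenProd ζ ω (prolateCoord a b x) := by
  rw [greenFn, greenFn, prolateGreenProd, prolateCoord, div_mul_div_comm, ← Complex.exp_add,
    ← Complex.exp_add]
  push_cast
  ring_nf

theorem stronglyMeasurable_prolateGreenProd : StronglyMeasurable (prolateGreenProd ζ ω) := by
  unfold prolateGreenProd
  exact Measurable.stronglyMeasurable (by fun_prop)

theorem sq_sub_sq_smul_prolateGreenProd {r : ℝ} {p : ℝ × ℝ} (hp : p ∈ prolateRegion r) :
    (p.1 ^ 2 - p.2 ^ 2) • prolateGreenProd ζ ω p = (4 * π ^ 2 : ℂ)⁻¹ *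
      (Complex.exp (I * (ζ + ω) / 2 * p.1) * Complex.exp (I * (ζ - ω) / 2 * p.2)) := by
  have hpos : ((p.1 ^ 2 - p.2 ^ 2 : ℝ) : ℂ) ≠ 0 :=
    ofReal_ne_zero.2 (sq_sub_sq_pos_of_mem_prolateRegion hp).ne'
  push_cast at hpos
  rw [prolateGreenProd, real_smul]
  push_cast
  field_simp

theorem re_I_mul_div_two_neg {z : ℂ} (hz : 0 < z.im) : (I * z / 2).re < 0 := by
  rw [div_ofNat_re, I_mul_re]
  linarith

theorem integrable_greenFn_mul_greenFn (hζω : 0 < (ζ + ω).im) (hab : a ≠ b) :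
    Integrable fun x => greenFn ζ a x * greenFn ω b x := by
  simp only [greenFn_mul_greenFn]
  rw [integrable_comp_prolateCoord_iff finrank_euclideanSpace_fin hab
    stronglyMeasurable_prolateGreenProd, integrableOn_congr_fun
    (fun p hp => sq_sub_sq_smul_prolateGreenProd hp) measurableSet_prolateRegion]
  exact (integrableOn_exp_mul_exp_prolateRegion (re_I_mul_div_two_neg hζω) _ _).const_mul _

theorem stmt4_general (hζω : 0 < (ζ + ω).im) (hne : ζ ≠ ω) (hab : a ≠ b) :
    Integrable (fun x => greenFn ζ a x * greenFn ω b x) ∧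
    ∫ x, greenFn ζ a x * greenFn ω b x =
      (Complex.exp (I * ζ * ‖a - b‖) - Complex.exp (I * ω * ‖a - b‖)) /
        ((4 * π * ‖a - b‖ : ℝ) * (ζ ^ 2 - ω ^ 2)) := by
  refine ⟨integrable_greenFn_mul_greenFn hζω hab, ?_⟩
  have hsub : ζ - ω ≠ 0 := sub_ne_zero.2 hne
  have hadd : ζ + ω ≠ 0 := fun h => by simp [h] at hζω
  have hr : (‖a - b‖ : ℂ) ≠ 0 := ofReal_ne_zero.2 (norm_ne_zero_iff.2 (sub_ne_zero.2 hab))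
  have hfactor : Complex.exp (I * ζ * ‖a - b‖) - Complex.exp (I * ω * ‖a - b‖) =
      Complex.exp (I * (ζ + ω) / 2 * ‖a - b‖) * (Complex.exp (I * (ζ - ω) / 2 * ‖a - b‖) -
        Complex.exp (-(I * (ζ - ω) / 2 * ‖a - b‖))) := by
    rw [mul_sub, ← Complex.exp_add, ← Complex.exp_add]
    ring_nf
  simp only [greenFn_mul_greenFn]
  rw [integral_comp_prolateCoord finrank_euclideanSpace_fin hab stronglyMeasurable_prolateGreenProd,
    setIntegral_congr_fun measurableSet_prolateRegion
      (fun p hp => sq_sub_sq_smul_prolateGreenProd hp),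
    integral_const_mul, integral_exp_mul_exp_prolateRegion (re_I_mul_div_two_neg hζω)
      (by simpa using hsub) (norm_nonneg _), hfactor, sq_sub_sq, real_smul]
  push_cast
  field_simp
  rw [I_sq]
  ring

end Green

/-- For `Im ζ > 0`, `Re ζ ≠ 0` and distinct `a b ∈ ℝ³`, with `r = |a - b|`,
the product `g_{ζ,a} · conj (g_{ζ,b})` is integrable and
`∫ g_{ζ,a}(x) conj (g_{ζ,b}(x)) dx = (e^{iζr} - e^{-i conj(ζ) r}) / (4πr (ζ² - conj(ζ)²))`. -/
theorem stmt4 (ζ : ℂ) (hζ : 0 < ζ.im) (hre : ζ.re ≠ 0)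
    (a b : EuclideanSpace ℝ (Fin 3)) (hab : a ≠ b) :
    Integrable (fun x => greenFn ζ a x * (starRingEnd ℂ) (greenFn ζ b x))
      (volume : Measure (EuclideanSpace ℝ (Fin 3))) ∧
    ∫ x : EuclideanSpace ℝ (Fin 3), greenFn ζ a x * (starRingEnd ℂ) (greenFn ζ b x) =
      (Complex.exp (Complex.I * ζ * (‖a - b‖ : ℝ)) -
        Complex.exp (-Complex.I * (starRingEnd ℂ ζ) * (‖a - b‖ : ℝ))) /
      (((4 * Real.pi * ‖a - b‖ : ℝ) : ℂ) * (ζ ^ 2 - (starRingEnd ℂ ζ) ^ 2)) := by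
  have hne : ζ ≠ -(starRingEnd ℂ) ζ := fun h => hre (by simpa [self_eq_neg] using congrArg re h)
  simpa only [conj_greenFn, mul_neg, neg_mul, neg_sq] using
    stmt4_general (a := a) (b := b) (by simpa using hζ) hne hab
end

section
/- Let φ : ℝ³ → ℂ be a smooth compactly supported function and let ζ ∈ ℂ with Im ζ > 0. Then for every x ∈ ℝ³, φ(x) = ∫_{ℝ³} (e^{iζ|x−y|}/(4π|x−y|)) · ( −Δφ(y) − ζ²·φ(y) ) dy, where Δφ denotes the Laplacian of φ, i.e. the sum of its three second partial derivatives. -/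
open MeasureTheory Complex Real

/-- The Laplacian `Δφ(y) = Σᵢ ∂²φ/∂yᵢ²` of a function `φ : ℝ³ → ℂ`, expressed via iterated
Fréchet derivatives in the coordinate directions. -/
noncomputable def laplacian3 (φ : EuclideanSpace ℝ (Fin 3) → ℂ)
    (y : EuclideanSpace ℝ (Fin 3)) : ℂ :=
  ∑ i : Fin 3,
    fderiv ℝ (fun w => fderiv ℝ φ w (EuclideanSpace.single i (1 : ℝ))) y
      (EuclideanSpace.single i (1 : ℝ))

/-!
Replace the distance `r` to the pole `x` by `√(r² + ε²)`. Away from the pole the kernel solves the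
homogeneous Helmholtz equation, and the regularization leaves over exactly `4ε²` times the second
derivative of the kernel with respect to `s² = r² + ε²`. This remainder is the rescaled Plummer
density `ε⁻³ · 3/(4π) · (1 + r²/ε²)^(-5/2)`, an approximate identity, times a factor continuous in
`s` and equal to `1` at `s = 0`. Moving `-Δ - ζ²` from `φ` onto the smooth regularized kernel and
letting `ε → 0` gives `φ x` on one side and, as `1 / r` is locally integrable, the integral against
the singular kernel on the other.
-/

open Filter Module Set Topology
open scoped Laplacian

section Laplacian

variable {E F : Type*} [NormedAddCommGroup E] [InnerProductSpace ℝ E]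
  [NormedAddCommGroup F] [NormedSpace ℝ F]

lemma hasFDerivAt_comp_norm_sub_sq {f : ℝ → F} {f' : F} {x y : E}
    (hf : HasDerivAt f f' (‖y - x‖ ^ 2)) :
    HasFDerivAt (fun w ↦ f (‖w - x‖ ^ 2)) ((2 • innerSL ℝ (y - x)).smulRight f') y := by
  have h := hf.hasFDerivAt.comp y ((hasFDerivAt_id y).sub_const x).norm_sq
  refine h.congr_fderiv ?_
  ext v
  simp only [id_eq, map_sub, ContinuousLinearMap.comp_id, ContinuousLinearMap.comp_smul,
    ContinuousLinearMap.comp_sub, smul_apply, sub_apply, ContinuousLinearMap.comp_apply,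
    coe_innerSL_apply, ContinuousLinearMap.toSpanSingleton_apply,
    ContinuousLinearMap.smulRight_apply, nsmul_eq_mul, Nat.cast_ofNat]
  module

variable [FiniteDimensional ℝ E]

lemma laplacian_eq_sum_fderiv_fderiv {ι : Type*} [Fintype ι] (b : OrthonormalBasis ι ℝ E)
    (f : E → F) (y : E) : Δ f y = ∑ i, fderiv ℝ (fderiv ℝ f) y (b i) (b i) := by
  simp [InnerProductSpace.laplacian_eq_iteratedFDeriv_orthonormalBasis f b,
    iteratedFDeriv_two_apply]

lemma laplacian_eq_sum_fderiv_fderiv_apply {ι : Type*} [Fintype ι] (b : OrthonormalBasis ι ℝ E)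
    {f : E → F} (hf : ContDiff ℝ 2 f) (y : E) :
    Δ f y = ∑ i, fderiv ℝ (fun w ↦ fderiv ℝ f w (b i)) y (b i) := by
  have hf' : DifferentiableAt ℝ (fderiv ℝ f) y :=
    (hf.fderiv_right (m := 1) (by norm_num)).differentiable (by norm_num) y
  simp [laplacian_eq_sum_fderiv_fderiv b, fderiv_clm_apply hf' (differentiableAt_const _)]

lemma laplacian3_eq_laplacian {φ : EuclideanSpace ℝ (Fin 3) → ℂ} (hφ : ContDiff ℝ 2 φ) :
    laplacian3 φ = Δ φ := by
  ext y
  simp [laplacian3,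
    laplacian_eq_sum_fderiv_fderiv_apply (EuclideanSpace.basisFun (Fin 3) ℝ) hφ]

lemma continuous_laplacian {f : E → F} (hf : ContDiff ℝ 2 f) : Continuous (Δ f) := by
  have : Continuous (fderiv ℝ (fderiv ℝ f)) :=
    (hf.fderiv_right (m := 1) (by norm_num)).continuous_fderiv (by norm_num)
  simp only [funext (laplacian_eq_sum_fderiv_fderiv (stdOrthonormalBasis ℝ E) f)]
  fun_prop

lemma hasCompactSupport_laplacian {f : E → F} (hf : HasCompactSupport f) :
    HasCompactSupport (Δ f) := by
  refine (hf.fderiv (𝕜 := ℝ)).fderiv (𝕜 := ℝ) |>.mono fun y hy ↦ ?_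
  contrapose! hy
  simp only [Function.mem_support, not_not] at hy ⊢
  simp [laplacian_eq_sum_fderiv_fderiv (stdOrthonormalBasis ℝ E), hy]

lemma laplacian_comp_norm_sub_sq {f f' : ℝ → F} {f'' : F} {x y : E}
    (hf : ∀ᶠ t in 𝓝 (‖y - x‖ ^ 2), HasDerivAt f (f' t) t)
    (hf' : HasDerivAt f' f'' (‖y - x‖ ^ 2)) :
    Δ (fun w ↦ f (‖w - x‖ ^ 2)) y =
      (4 * ‖y - x‖ ^ 2) • f'' + (2 * finrank ℝ E : ℝ) • f' (‖y - x‖ ^ 2) := by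
  let b := stdOrthonormalBasis ℝ E
  have hfderiv : fderiv ℝ (fun w ↦ f (‖w - x‖ ^ 2)) =ᶠ[𝓝 y]
      fun w ↦ (2 • innerSL ℝ (w - x)).smulRight (f' (‖w - x‖ ^ 2)) := by
    have hcont : ContinuousAt (fun w ↦ ‖w - x‖ ^ 2) y := by fun_prop
    filter_upwards [hcont.eventually hf] with w hw
    exact (hasFDerivAt_comp_norm_sub_sq hw).fderiv
  have hinner : HasFDerivAt (fun w ↦ 2 • innerSL ℝ (w - x)) (2 • innerSL ℝ) y :=
    ((innerSL ℝ).hasFDerivAt.comp y ((hasFDerivAt_id y).sub_const x)).const_smul 2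
  have hsecond := ((ContinuousLinearMap.smulRightL ℝ E F).hasFDerivAt_of_bilinear hinner
    (hasFDerivAt_comp_norm_sub_sq hf')).congr_of_eventuallyEq hfderiv
  have hterm (i) : fderiv ℝ (fderiv ℝ (fun w ↦ f (‖w - x‖ ^ 2))) y (b i) (b i) =
      (4 * inner ℝ (y - x) (b i) ^ 2) • f'' + (2 : ℝ) • f' (‖y - x‖ ^ 2) := by
    rw [hsecond.fderiv]
    have hb : innerSL ℝ (b i) (b i) = 1 := by simp
    generalize y - x = z
    simp only [ContinuousLinearMap.map_smul_of_tower, ContinuousLinearMap.precompR_apply,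
      smul_apply, ContinuousLinearMap.compL_apply, add_apply, ContinuousLinearMap.comp_apply,
      ContinuousLinearMap.smulRight_apply, coe_innerSL_apply, nsmul_eq_mul, Nat.cast_ofNat,
      map_smul, ContinuousLinearMap.smulRightL_apply_apply, ContinuousLinearMap.precompL_apply, hb,
      one_smul]
    module
  simp only [laplacian_eq_sum_fderiv_fderiv b, hterm, Finset.sum_add_distrib, ← Finset.sum_smul,
    ← Finset.mul_sum, b.sum_sq_inner_left]
  simp [mul_comm]

end Laplacian

section IntegrationByParts

variable {E F 𝕜 : Type*} [NormedAddCommGroup E] [MeasurableSpace E] [BorelSpace E]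
  {μ : Measure E} [NormedField 𝕜] [NormedAlgebra ℝ 𝕜] [NormedAddCommGroup F] [NormedSpace ℝ F]
  [NormedSpace 𝕜 F] [IsScalarTower ℝ 𝕜 F] {g : E → 𝕜} {f : E → F}

lemma integral_smul_fderiv_eq_neg_of_hasCompactSupport [NormedSpace ℝ E] [FiniteDimensional ℝ E]
    [μ.IsAddHaarMeasure] (hg : ContDiff ℝ 1 g) (hf : ContDiff ℝ 1 f) (hsupp : HasCompactSupport f)
    (v : E) : ∫ y, g y • fderiv ℝ f y v ∂μ = -∫ y, fderiv ℝ g y v • f y ∂μ := by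
  have hg' : Continuous fun y ↦ fderiv ℝ g y v :=
    (hg.continuous_fderiv one_ne_zero).clm_apply continuous_const
  have hf' : Continuous fun y ↦ fderiv ℝ f y v :=
    (hf.continuous_fderiv one_ne_zero).clm_apply continuous_const
  exact integral_smul_fderiv_eq_neg_fderiv_smul_of_integrable
    ((hg'.smul hf.continuous).integrable_of_hasCompactSupport hsupp.smul_left)
    ((hg.continuous.smul hf').integrable_of_hasCompactSupport
      (hsupp.fderiv_apply (𝕜 := ℝ) v).smul_left)
    ((hg.continuous.smul hf.continuous).integrable_of_hasCompactSupport hsupp.smul_left)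
    (fun y _ ↦ hg.differentiable one_ne_zero y) (fun y _ ↦ hf.differentiable one_ne_zero y)

variable [InnerProductSpace ℝ E] [FiniteDimensional ℝ E] [μ.IsAddHaarMeasure]

lemma integral_smul_laplacian_eq (hg : ContDiff ℝ 2 g) (hf : ContDiff ℝ 2 f)
    (hsupp : HasCompactSupport f) : ∫ y, g y • Δ f y ∂μ = ∫ y, Δ g y • f y ∂μ := by
  let b := stdOrthonormalBasis ℝ E
  have hg' (i) : ContDiff ℝ 1 fun y ↦ fderiv ℝ g y (b i) :=
    (hg.fderiv_right (by norm_num)).clm_apply contDiff_const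
  have hf' (i) : ContDiff ℝ 1 fun y ↦ fderiv ℝ f y (b i) :=
    (hf.fderiv_right (by norm_num)).clm_apply contDiff_const
  have hsupp' (i) : HasCompactSupport fun y ↦ fderiv ℝ f y (b i) := hsupp.fderiv_apply (𝕜 := ℝ) _
  simp only [laplacian_eq_sum_fderiv_fderiv_apply b hg, laplacian_eq_sum_fderiv_fderiv_apply b hf,
    Finset.smul_sum, Finset.sum_smul]
  rw [integral_finsetSum, integral_finsetSum]
  · refine Finset.sum_congr rfl fun i _ ↦ ?_
    rw [integral_smul_fderiv_eq_neg_of_hasCompactSupport (hg.of_le one_le_two) (hf' i) (hsupp' i),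
      integral_smul_fderiv_eq_neg_of_hasCompactSupport (hg' i) (hf.of_le one_le_two) hsupp, neg_neg]
  · intro i _
    refine Continuous.integrable_of_hasCompactSupport ?_ hsupp.smul_left
    exact (((hg' i).continuous_fderiv one_ne_zero).clm_apply continuous_const).smul hf.continuous
  · intro i _
    refine Continuous.integrable_of_hasCompactSupport ?_
      ((hsupp' i).fderiv_apply (𝕜 := ℝ) _).smul_left
    exact hg.continuous.smul (((hf' i).continuous_fderiv one_ne_zero).clm_apply continuous_const)

lemma integral_smul_neg_laplacian_sub_smul_eq (hg : ContDiff ℝ 2 g) (hf : ContDiff ℝ 2 f)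
    (hsupp : HasCompactSupport f) (c : 𝕜) :
    ∫ y, g y • (-Δ f y - c • f y) ∂μ = ∫ y, (-Δ g y - c * g y) • f y ∂μ := by
  have hΔf : Integrable (fun y ↦ -(g y • Δ f y)) μ :=
    ((hg.continuous.smul (continuous_laplacian hf)).integrable_of_hasCompactSupport
      (hasCompactSupport_laplacian hsupp).smul_left).neg
  have hΔg : Integrable (fun y ↦ -(Δ g y • f y)) μ :=
    (((continuous_laplacian hg).smul hf.continuous).integrable_of_hasCompactSupport
      hsupp.smul_left).neg
  have hgf : Integrable (fun y ↦ (c * g y) • f y) μ :=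
    ((continuous_const.mul hg.continuous).smul hf.continuous).integrable_of_hasCompactSupport
      hsupp.smul_left
  simp only [smul_sub, sub_smul, smul_neg, neg_smul, smul_smul, mul_comm _ c]
  rw [integral_sub hΔf hgf, integral_sub hΔg hgf, integral_neg, integral_neg,
    integral_smul_laplacian_eq hg hf hsupp]

end IntegrationByParts

section ApproximateIdentity

lemma exists_norm_le_of_eq_zero_of_notMem {X Y F : Type*} [TopologicalSpace X]
    [TopologicalSpace Y] [SeminormedAddCommGroup F] {f : X → Y → F}
    (hf : Continuous (Function.uncurry f)) {S : Set X} (hS : IsCompact S) {T : Set Y}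
    (hT : IsCompact T) (hzero : ∀ a ∈ S, ∀ y ∉ T, f a y = 0) :
    ∃ C, ∀ a ∈ S, ∀ y, ‖f a y‖ ≤ C := by
  obtain ⟨C, hC⟩ := (hS.prod hT).exists_bound_of_continuousOn hf.continuousOn
  refine ⟨max C 0, fun a ha y ↦ ?_⟩
  by_cases hy : y ∈ T
  · exact (hC (a, y) ⟨ha, hy⟩).trans (le_max_left _ _)
  · simp [hzero a ha y hy]

variable {E F : Type*} [NormedAddCommGroup E] [NormedSpace ℝ E] [FiniteDimensional ℝ E]
  [MeasurableSpace E] [BorelSpace E] {μ : Measure E} [μ.IsAddHaarMeasure]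
  [NormedAddCommGroup F] [NormedSpace ℝ F]

lemma integral_inv_pow_mul_comp_inv_smul_sub (K : E → ℝ) (f : E → F) (x : E) {ε : ℝ}
    (hε : 0 < ε) : ∫ y, ((ε ^ finrank ℝ E)⁻¹ * K (ε⁻¹ • (y - x))) • f y ∂μ =
      ∫ z, K z • f (x + ε • z) ∂μ := by
  have h := Measure.integral_comp_inv_smul_of_nonneg μ (fun z ↦ K z • f (x + ε • z)) hε.le
  rw [← integral_sub_right_eq_self _ x] at h
  have hpow : ε ^ finrank ℝ E ≠ 0 := by positivity
  rw [← inv_smul_eq_iff₀ hpow, ← integral_smul] at h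
  simpa [smul_smul, hε.ne'] using h

lemma tendsto_integral_inv_pow_mul_comp_inv_smul_sub [CompleteSpace F] {K : E → ℝ}
    (hK : Integrable K μ) {f : ℝ → E → F} (hf : Continuous (Function.uncurry f)) {C : ℝ}
    (hC : ∀ ε ∈ Icc (0 : ℝ) 1, ∀ y, ‖f ε y‖ ≤ C) (x : E) :
    Tendsto (fun ε ↦ ∫ y, ((ε ^ finrank ℝ E)⁻¹ * K (ε⁻¹ • (y - x))) • f ε y ∂μ)
      (𝓝[>] 0) (𝓝 ((∫ z, K z ∂μ) • f 0 x)) := by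
  have hrescaled : Tendsto (fun ε : ℝ ↦ ∫ z, K z • f ε (x + ε • z) ∂μ)
      (𝓝[>] 0) (𝓝 (∫ z, K z • f 0 x ∂μ)) := by
    refine tendsto_integral_filter_of_dominated_convergence (fun z ↦ ‖K z‖ * C) ?_ ?_
      (hK.norm.mul_const C) ?_
    · refine Eventually.of_forall fun ε ↦ hK.aestronglyMeasurable.smul ?_
      exact (hf.comp (by fun_prop : Continuous fun z ↦ (ε, x + ε • z))).aestronglyMeasurable
    · filter_upwards [Ioc_mem_nhdsGT one_pos] with ε hε
      refine Eventually.of_forall fun z ↦ ?_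
      rw [norm_smul]
      gcongr
      exact hC ε (Ioc_subset_Icc_self hε) _
    · refine Eventually.of_forall fun z ↦ ?_
      have h : Continuous fun ε : ℝ ↦ K z • f ε (x + ε • z) :=
        (hf.comp (by fun_prop : Continuous fun ε : ℝ ↦ (ε, x + ε • z))).const_smul (K z)
      simpa using (h.tendsto 0).mono_left nhdsWithin_le_nhds
  rw [← integral_smul_const]
  refine hrescaled.congr' ?_
  filter_upwards [self_mem_nhdsWithin] with ε hε
  exact (integral_inv_pow_mul_comp_inv_smul_sub K (f ε) x hε).symm

end ApproximateIdentity

section Plummer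

lemma hasDerivAt_div_sqrt_one_add_sq (r : ℝ) :
    HasDerivAt (fun r ↦ r / √(1 + r ^ 2)) (√(1 + r ^ 2) ^ 3)⁻¹ r := by
  have hpos : 0 < 1 + r ^ 2 := by positivity
  have hsqrt : HasDerivAt (fun r : ℝ ↦ √(1 + r ^ 2)) (r / √(1 + r ^ 2)) r := by
    convert! ((hasDerivAt_pow 2 r).const_add 1).sqrt hpos.ne' using 1
    simp only [Nat.cast_ofNat, Nat.add_one_sub_one, pow_one]
    field_simp
  refine ((hasDerivAt_id r).div hsqrt (by positivity)).congr_deriv ?_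
  have hsq := Real.sq_sqrt hpos.le
  simp only [id]
  field_simp
  linarith

lemma tendsto_div_sqrt_one_add_sq : Tendsto (fun r : ℝ ↦ r / √(1 + r ^ 2)) atTop (𝓝 1) := by
  have hinv : Tendsto (fun r : ℝ ↦ (√(1 + (r⁻¹) ^ 2))⁻¹) atTop (𝓝 (√(1 + 0 ^ 2))⁻¹) :=
    ((tendsto_inv_atTop_zero.pow 2).const_add 1).sqrt.inv₀ (by simp)
  refine (by simpa using hinv : Tendsto _ _ (𝓝 (1 : ℝ))).congr' ?_
  filter_upwards [eventually_gt_atTop 0] with r hr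
  have h : 1 + r ^ 2 = r ^ 2 * (1 + (r ^ 2)⁻¹) := by field_simp; ring
  rw [h, Real.sqrt_mul (by positivity), Real.sqrt_sq hr.le]
  field_simp

lemma integral_Ioi_pow_div_sqrt_one_add_sq_pow (n : ℕ) :
    ∫ r in Ioi (0 : ℝ), r ^ n * (√(1 + r ^ 2) ^ (n + 3))⁻¹ = (n + 1 : ℝ)⁻¹ := by
  have h := integral_Ioi_of_hasDerivAt_of_nonneg' (a := 0) (l := 1)
    (g := fun r ↦ (r / √(1 + r ^ 2)) ^ (n + 1))
    (g' := fun r ↦ (n + 1) * (r ^ n * (√(1 + r ^ 2) ^ (n + 3))⁻¹)) (fun r _ ↦ ?_)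
    (fun r hr ↦ ?_) (by simpa using tendsto_div_sqrt_one_add_sq.pow (n + 1))
  · rw [integral_const_mul] at h
    exact eq_inv_of_mul_eq_one_right (by simpa using h)
  · refine ((hasDerivAt_div_sqrt_one_add_sq r).pow (n + 1)).congr_deriv ?_
    have : 0 < √(1 + r ^ 2) := by positivity
    simp only [Nat.add_sub_cancel, Nat.cast_add, Nat.cast_one, div_pow]
    field_simp
    ring
  · have : 0 < r := hr
    positivity

variable {E : Type*} [NormedAddCommGroup E] [NormedSpace ℝ E] [MeasurableSpace E]

/-- The Plummer density `c (1 + ‖z‖²)^(-(d + 2) / 2)` in dimension `d`, with `c` the inverse of the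
volume of the unit ball, so that the total mass is one. Up to a constant, its rescaling by `ε` is
the Laplacian of `(‖z‖² + ε²)^(-(d - 2) / 2)`. -/
noncomputable def plummerDensity (μ : Measure E) (z : E) : ℝ :=
  (μ.real (Metric.ball (0 : E) 1))⁻¹ * (√(1 + ‖z‖ ^ 2) ^ (finrank ℝ E + 2))⁻¹

variable [FiniteDimensional ℝ E] [Nontrivial E] [BorelSpace E] (μ : Measure E)
  [μ.IsAddHaarMeasure]

lemma integral_plummerDensity : ∫ z, plummerDensity μ z ∂μ = 1 := by
  obtain ⟨n, hn⟩ : ∃ n, finrank ℝ E = n + 1 := Nat.exists_eq_add_one.2 finrank_pos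
  have hball : μ.real (Metric.ball (0 : E) 1) ≠ 0 :=
    ENNReal.toReal_ne_zero.2 ⟨(Metric.measure_ball_pos μ 0 one_pos).ne', measure_ball_lt_top.ne⟩
  have hradial := integral_fun_norm_addHaar μ fun r ↦ (√(1 + r ^ 2) ^ (finrank ℝ E + 2))⁻¹
  have h := integral_Ioi_pow_div_sqrt_one_add_sq_pow n
  simp only [hn, Nat.add_sub_cancel, smul_eq_mul, nsmul_eq_mul, add_assoc, Nat.reduceAdd, h]
    at hradial
  simp only [plummerDensity, integral_const_mul, hn, add_assoc, Nat.reduceAdd, hradial]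
  push_cast
  field_simp

lemma integrable_plummerDensity : Integrable (plummerDensity μ) μ :=
  .of_integral_ne_zero (by simp [integral_plummerDensity])

end Plummer

lemma plummerDensity_volume_of_finrank_eq_three {E : Type*} [NormedAddCommGroup E]
    [InnerProductSpace ℝ E] [FiniteDimensional ℝ E] [MeasurableSpace E] [BorelSpace E]
    (hdim : finrank ℝ E = 3) (z : E) :
    plummerDensity volume z = 3 / (4 * π) * (√(1 + ‖z‖ ^ 2) ^ 5)⁻¹ := by
  have : Nontrivial E := nontrivial_of_finrank_pos (R := ℝ) (by omega)
  have hball : volume.real (Metric.ball (0 : E) 1) = 4 * π / 3 := by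
    rw [measureReal_def, InnerProductSpace.volume_ball_of_dim_odd (k := 1) (by omega), hdim,
      ENNReal.ofReal_one, one_pow, one_mul, ENNReal.toReal_ofReal (by positivity)]
    norm_num [Nat.doubleFactorial]
    ring
  simp [plummerDensity, hball, hdim]

section Kernel

/-- The outgoing fundamental solution `exp (iζs) / (4πs)` of `-Δ - ζ²` on a three-dimensional space,
as a function of the distance `s` to its pole. -/
noncomputable def helmholtzKernel (ζ : ℂ) (s : ℝ) : ℂ :=
  exp (I * ζ * s) / ((4 * π * s : ℝ) : ℂ)

/-- The derivative of `helmholtzKernel ζ s` with respect to `s ^ 2`. -/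
noncomputable def helmholtzKernelSqDeriv (ζ : ℂ) (s : ℝ) : ℂ :=
  exp (I * ζ * s) * (I * ζ * s - 1) / ((8 * π * s ^ 3 : ℝ) : ℂ)

/-- The factor by which the second derivative of `helmholtzKernel ζ s` with respect to `s ^ 2`
differs from its value `3 / (16πs⁵)` at `ζ = 0`. -/
noncomputable def helmholtzAmplitude (ζ : ℂ) (s : ℝ) : ℂ :=
  exp (I * ζ * s) * (1 - I * ζ * s - ζ ^ 2 * s ^ 2 / 3)

variable (ζ : ℂ)

lemma helmholtzAmplitude_zero : helmholtzAmplitude ζ 0 = 1 := by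
  simp [helmholtzAmplitude]

lemma continuous_helmholtzAmplitude : Continuous (helmholtzAmplitude ζ) := by
  unfold helmholtzAmplitude
  fun_prop

lemma hasDerivAt_comp_sqrt {F : Type*} [NormedAddCommGroup F] [NormedSpace ℝ F] {g : ℝ → F} {g' : F}
    {t : ℝ} (ht : 0 < t) (hg : HasDerivAt g g' √t) :
    HasDerivAt (fun t ↦ g √t) ((2 * √t)⁻¹ • g') t := by
  simpa [Function.comp_def] using hg.scomp t (Real.hasDerivAt_sqrt ht.ne')

lemma hasDerivAt_exp_I_mul_mul_ofReal (s : ℝ) :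
    HasDerivAt (fun s : ℝ ↦ exp (I * ζ * s)) (exp (I * ζ * s) * (I * ζ)) s := by
  simpa using ((hasDerivAt_id s).ofReal_comp.const_mul (I * ζ)).cexp

lemma hasDerivAt_helmholtzKernel_sqrt {t : ℝ} (ht : 0 < t) :
    HasDerivAt (fun t ↦ helmholtzKernel ζ √t) (helmholtzKernelSqDeriv ζ √t) t := by
  refine (hasDerivAt_comp_sqrt ht ((hasDerivAt_exp_I_mul_mul_ofReal ζ √t).div
    ((hasDerivAt_id √t).const_mul (4 * π)).ofReal_comp ?_)).congr_deriv ?_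
  · exact_mod_cast (by positivity : 4 * π * √t ≠ 0)
  · simp only [mul_inv_rev, id_eq, ofReal_mul, ofReal_ofNat, mul_one, real_smul, ofReal_inv,
      helmholtzKernelSqDeriv, ofReal_pow]
    field_simp
    ring

lemma hasDerivAt_helmholtzKernelSqDeriv_sqrt {t : ℝ} (ht : 0 < t) :
    HasDerivAt (fun t ↦ helmholtzKernelSqDeriv ζ √t)
      ((3 / (16 * π * √t ^ 5)) • helmholtzAmplitude ζ √t) t := by
  have hs : 0 < √t := by positivity
  refine (hasDerivAt_comp_sqrt ht (((hasDerivAt_exp_I_mul_mul_ofReal ζ √t).mul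
    (((hasDerivAt_id √t).ofReal_comp.const_mul (I * ζ)).sub_const 1)).div
    ((hasDerivAt_pow 3 √t).const_mul (8 * π)).ofReal_comp ?_)).congr_deriv ?_
  · exact_mod_cast (by positivity : 8 * π * √t ^ 3 ≠ 0)
  · have hs' : (√t : ℂ) ≠ 0 := by exact_mod_cast hs.ne'
    simp only [mul_inv_rev, id_eq, ofReal_one, mul_one, ofReal_mul, ofReal_ofNat, ofReal_pow,
      Pi.mul_apply, Nat.cast_ofNat, Nat.add_one_sub_one, real_smul, ofReal_inv, helmholtzAmplitude,
      ofReal_div]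
    field_simp
    ring_nf
    simp only [I_sq]
    ring

/-- The Laplacian of a radial function in dimension three is `4t ∂ₜ² + 6 ∂ₜ`, where `t = s ^ 2`. -/
lemma helmholtzKernel_ode {s : ℝ} (hs : s ≠ 0) :
    (4 * s ^ 2) • (3 / (16 * π * s ^ 5)) • helmholtzAmplitude ζ s +
      (6 : ℝ) • helmholtzKernelSqDeriv ζ s = -ζ ^ 2 * helmholtzKernel ζ s := by
  have hs' : (s : ℂ) ≠ 0 := by exact_mod_cast hs
  simp only [helmholtzAmplitude, real_smul, ofReal_div, ofReal_ofNat, ofReal_mul, ofReal_pow,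
    helmholtzKernelSqDeriv, helmholtzKernel]
  field_simp
  ring

lemma norm_helmholtzKernel_le {r s R : ℝ} (hr : 0 < r) (hrs : r ≤ s) (hsR : s ≤ R) :
    ‖helmholtzKernel ζ s‖ ≤ r⁻¹ * Real.exp (‖ζ‖ * R) := by
  have hs : 0 < s := hr.trans_le hrs
  have hnum : ‖exp (I * ζ * s)‖ ≤ Real.exp (‖ζ‖ * R) := by
    refine (norm_exp_le_exp_norm _).trans (Real.exp_le_exp.2 ?_)
    rw [norm_mul, norm_mul, norm_I, one_mul, norm_real, Real.norm_of_nonneg hs.le]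
    gcongr
  have hden : r ≤ 4 * π * s := by nlinarith [pi_gt_three]
  rw [helmholtzKernel, norm_div, norm_real, Real.norm_of_nonneg (by positivity), div_eq_inv_mul]
  gcongr

lemma contDiffAt_helmholtzKernel {n : WithTop ℕ∞} {s : ℝ} (hs : s ≠ 0) :
    ContDiffAt ℝ n (helmholtzKernel ζ) s := by
  have hden : ((4 * π * s : ℝ) : ℂ) ≠ 0 := by exact_mod_cast (by positivity : 4 * π * s ≠ 0)
  have hcast : ContDiff ℝ n ((↑) : ℝ → ℂ) := ofRealCLM.contDiff
  exact ((contDiff_const.mul hcast).cexp.contDiffAt.mul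
    ((hcast.comp (contDiff_const.mul contDiff_id)).contDiffAt.inv hden)).congr_of_eventuallyEq
    (.of_forall fun s ↦ div_eq_mul_inv _ _)

end Kernel

section RegularizedKernel

variable {E : Type*} [NormedAddCommGroup E]

/-- The Helmholtz kernel with pole `x`, made smooth by replacing the distance `‖y - x‖` with
`√(‖y - x‖ ^ 2 + ε ^ 2)`. -/
noncomputable def regularizedHelmholtzKernel (ζ : ℂ) (ε : ℝ) (x y : E) : ℂ :=
  helmholtzKernel ζ √(‖y - x‖ ^ 2 + ε ^ 2)

lemma norm_regularizedHelmholtzKernel_le (ζ : ℂ) {ε : ℝ} (hε : ε ∈ Icc 0 1) {x y : E}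
    (hxy : y ≠ x) :
    ‖regularizedHelmholtzKernel ζ ε x y‖ ≤ ‖y - x‖⁻¹ * Real.exp (‖ζ‖ * (‖y - x‖ + 1)) := by
  refine norm_helmholtzKernel_le ζ (norm_sub_pos_iff.2 hxy) ?_ ?_
  · exact Real.le_sqrt_of_sq_le (le_add_of_nonneg_right (sq_nonneg ε))
  · have hε_sq : ε ^ 2 ≤ 1 := pow_le_one₀ hε.1 hε.2
    exact (Real.sqrt_le_left (by positivity)).2 (by nlinarith [norm_nonneg (y - x)])

lemma tendsto_regularizedHelmholtzKernel (ζ : ℂ) {x y : E} (hxy : y ≠ x) :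
    Tendsto (fun ε ↦ regularizedHelmholtzKernel ζ ε x y) (𝓝 0) (𝓝 (helmholtzKernel ζ ‖y - x‖)) := by
  have hsqrt : Tendsto (fun ε : ℝ ↦ √(‖y - x‖ ^ 2 + ε ^ 2)) (𝓝 0) (𝓝 ‖y - x‖) := by
    have h : Continuous fun ε : ℝ ↦ √(‖y - x‖ ^ 2 + ε ^ 2) := by fun_prop
    simpa using h.tendsto 0
  exact (contDiffAt_helmholtzKernel (n := 0) ζ
    (norm_sub_pos_iff.2 hxy).ne').continuousAt.tendsto.comp hsqrt

variable [InnerProductSpace ℝ E]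

lemma contDiff_regularizedHelmholtzKernel {n : WithTop ℕ∞} (ζ : ℂ) {ε : ℝ} (hε : 0 < ε) (x : E) :
    ContDiff ℝ n (regularizedHelmholtzKernel ζ ε x) := by
  refine contDiff_iff_contDiffAt.2 fun y ↦ ?_
  have hpos : 0 < ‖y - x‖ ^ 2 + ε ^ 2 := by positivity
  have hdist : ContDiff ℝ n fun y ↦ ‖y - x‖ ^ 2 + ε ^ 2 :=
    ((contDiff_id.sub contDiff_const).norm_sq ℝ).add contDiff_const
  exact (contDiffAt_helmholtzKernel ζ (Real.sqrt_pos.2 hpos).ne').comp y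
    (hdist.contDiffAt.sqrt hpos.ne')

variable [FiniteDimensional ℝ E]

lemma neg_laplacian_regularizedHelmholtzKernel_sub (hdim : finrank ℝ E = 3) (ζ : ℂ) {ε : ℝ}
    (hε : 0 < ε) (x y : E) :
    -Δ (regularizedHelmholtzKernel ζ ε x) y - ζ ^ 2 * regularizedHelmholtzKernel ζ ε x y =
      (4 * ε ^ 2) • (3 / (16 * π * √(‖y - x‖ ^ 2 + ε ^ 2) ^ 5)) •
        helmholtzAmplitude ζ √(‖y - x‖ ^ 2 + ε ^ 2) := by
  have hpos {t : ℝ} (ht : -ε ^ 2 < t) : 0 < t + ε ^ 2 := by linarith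
  have hnorm : -ε ^ 2 < ‖y - x‖ ^ 2 := by nlinarith [sq_nonneg ‖y - x‖, sq_pos_of_pos hε]
  have hlaplacian := laplacian_comp_norm_sub_sq (x := x) (y := y)
    ((lt_mem_nhds hnorm).mono fun t ht ↦
      (hasDerivAt_helmholtzKernel_sqrt ζ (hpos ht)).comp_add_const t (ε ^ 2))
    ((hasDerivAt_helmholtzKernelSqDeriv_sqrt ζ (hpos hnorm)).comp_add_const _ (ε ^ 2))
  have hode := helmholtzKernel_ode ζ (Real.sqrt_pos.2 (hpos hnorm)).ne'
  rw [Real.sq_sqrt (hpos hnorm).le] at hode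
  unfold regularizedHelmholtzKernel
  rw [hlaplacian, hdim]
  simp only [real_smul] at hode ⊢
  push_cast at hode ⊢
  linear_combination -hode

lemma neg_laplacian_regularizedHelmholtzKernel_sub_eq_plummerDensity [MeasurableSpace E]
    [BorelSpace E] (hdim : finrank ℝ E = 3) (ζ : ℂ) {ε : ℝ} (hε : 0 < ε) (x y : E) :
    -Δ (regularizedHelmholtzKernel ζ ε x) y - ζ ^ 2 * regularizedHelmholtzKernel ζ ε x y =
      ((ε ^ finrank ℝ E)⁻¹ * plummerDensity volume (ε⁻¹ • (y - x))) •
        helmholtzAmplitude ζ √(‖y - x‖ ^ 2 + ε ^ 2) := by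
  have hscale : √(‖y - x‖ ^ 2 + ε ^ 2) = ε * √(1 + ‖ε⁻¹ • (y - x)‖ ^ 2) := by
    rw [← Real.sqrt_sq hε.le, ← Real.sqrt_mul (by positivity), Real.sqrt_sq hε.le, norm_smul,
      Real.norm_of_nonneg (by positivity)]
    congr 1
    field_simp
    ring
  rw [neg_laplacian_regularizedHelmholtzKernel_sub hdim ζ hε, smul_smul, hdim,
    plummerDensity_volume_of_finrank_eq_three hdim]
  congr 1
  rw [hscale]
  field_simp
  ring

end RegularizedKernel

section Limits

lemma integrable_inv_norm_sub_mul {E : Type*} [NormedAddCommGroup E] [NormedSpace ℝ E]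
    [FiniteDimensional ℝ E] [MeasurableSpace E] [BorelSpace E] {μ : Measure E} [μ.IsAddHaarMeasure]
    (hdim : 1 < finrank ℝ E) {g : E → ℝ} (hg : Continuous g) (hsupp : HasCompactSupport g) (x : E) :
    Integrable (fun y ↦ ‖y - x‖⁻¹ * g y) μ := by
  have hloc : LocallyIntegrable (fun z : E ↦ ‖z‖⁻¹) μ :=
    locallyIntegrable_of_norm_le_rpow (C := 1) (α := 1) hdim.le (by exact_mod_cast hdim)
      (by simp [Real.rpow_neg_one]) (by fun_prop)
  have htranslate := hloc.integrable_smul_right_of_hasCompactSupport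
    (hg.comp (continuous_add_const x)) (hsupp.comp_homeomorph (Homeomorph.addRight x))
  simpa using htranslate.comp_sub_right x

variable {E F : Type*} [NormedAddCommGroup E] [InnerProductSpace ℝ E] [FiniteDimensional ℝ E]
  [MeasurableSpace E] [BorelSpace E] [NormedAddCommGroup F] [NormedSpace ℂ F]

lemma tendsto_integral_plummerDensity_smul_helmholtzAmplitude_smul [Nontrivial E] [CompleteSpace F]
    {φ : E → F} (hφ : Continuous φ) (hsupp : HasCompactSupport φ) (ζ : ℂ) (x : E) :
    Tendsto (fun ε : ℝ ↦ ∫ y, ((ε ^ finrank ℝ E)⁻¹ * plummerDensity volume (ε⁻¹ • (y - x))) •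
      helmholtzAmplitude ζ √(‖y - x‖ ^ 2 + ε ^ 2) • φ y) (𝓝[>] 0) (𝓝 (φ x)) := by
  let f (ε : ℝ) (y : E) : F := helmholtzAmplitude ζ √(‖y - x‖ ^ 2 + ε ^ 2) • φ y
  have hf : Continuous (Function.uncurry f) :=
    ((continuous_helmholtzAmplitude ζ).comp (by fun_prop)).smul (hφ.comp continuous_snd)
  obtain ⟨C, hC⟩ := exists_norm_le_of_eq_zero_of_notMem hf (isCompact_Icc (a := 0) (b := 1))
    hsupp.isCompact fun ε _ y hy ↦ by simp [f, image_eq_zero_of_notMem_tsupport hy]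
  simpa [f, integral_plummerDensity, helmholtzAmplitude_zero] using
    tendsto_integral_inv_pow_mul_comp_inv_smul_sub (integrable_plummerDensity volume) hf hC x

lemma tendsto_integral_regularizedHelmholtzKernel_smul (hdim : 1 < finrank ℝ E)
    {ψ : E → F} (hψ : Continuous ψ) (hsupp : HasCompactSupport ψ) (ζ : ℂ) (x : E) :
    Tendsto (fun ε ↦ ∫ y, regularizedHelmholtzKernel ζ ε x y • ψ y) (𝓝[>] 0)
      (𝓝 (∫ y, helmholtzKernel ζ ‖y - x‖ • ψ y)) := by
  have : Nontrivial E := nontrivial_of_finrank_pos (R := ℝ) (by omega)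
  have hne : ∀ᵐ y : E, y ≠ x := by simp [ae_iff]
  refine tendsto_integral_filter_of_dominated_convergence
    (fun y ↦ ‖y - x‖⁻¹ * (Real.exp (‖ζ‖ * (‖y - x‖ + 1)) * ‖ψ y‖)) ?_ ?_ ?_ ?_
  · filter_upwards [self_mem_nhdsWithin] with ε hε
    exact ((contDiff_regularizedHelmholtzKernel (n := 0) ζ hε x).continuous.smul
      hψ).aestronglyMeasurable
  · filter_upwards [Ioc_mem_nhdsGT one_pos] with ε hε
    filter_upwards [hne] with y hy
    rw [norm_smul, ← mul_assoc]
    gcongr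
    exact norm_regularizedHelmholtzKernel_le ζ (Ioc_subset_Icc_self hε) hy
  · exact integrable_inv_norm_sub_mul hdim (by fun_prop) hsupp.norm.mul_left x
  · filter_upwards [hne] with y hy
    exact ((tendsto_regularizedHelmholtzKernel ζ hy).mono_left nhdsWithin_le_nhds).smul_const _

end Limits

theorem stmt10_general {E F : Type*} [NormedAddCommGroup E] [InnerProductSpace ℝ E]
    [FiniteDimensional ℝ E] [MeasurableSpace E] [BorelSpace E] [NormedAddCommGroup F]
    [NormedSpace ℂ F] [CompleteSpace F] (hdim : finrank ℝ E = 3) {φ : E → F} (hφ : ContDiff ℝ 2 φ)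
    (hsupp : HasCompactSupport φ) (ζ : ℂ) (x : E) :
    φ x = ∫ y, helmholtzKernel ζ ‖x - y‖ • (-Δ φ y - ζ ^ 2 • φ y) := by
  have : Nontrivial E := nontrivial_of_finrank_pos (R := ℝ) (by omega)
  have hparts : ∀ᶠ ε in 𝓝[>] 0,
      ∫ y, regularizedHelmholtzKernel ζ ε x y • (-Δ φ y - ζ ^ 2 • φ y) =
        ∫ y, ((ε ^ finrank ℝ E)⁻¹ * plummerDensity volume (ε⁻¹ • (y - x))) •
          helmholtzAmplitude ζ √(‖y - x‖ ^ 2 + ε ^ 2) • φ y := by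
    filter_upwards [self_mem_nhdsWithin] with ε hε
    simp only [integral_smul_neg_laplacian_sub_smul_eq
      (contDiff_regularizedHelmholtzKernel ζ hε x) hφ hsupp,
      neg_laplacian_regularizedHelmholtzKernel_sub_eq_plummerDensity hdim ζ hε, smul_assoc]
  have hcont : Continuous fun y ↦ -Δ φ y - ζ ^ 2 • φ y :=
    (continuous_laplacian hφ).neg.sub (hφ.continuous.const_smul _)
  have hcompact : HasCompactSupport fun y ↦ -Δ φ y - ζ ^ 2 • φ y :=
    (hasCompactSupport_laplacian hsupp).neg.sub hsupp.smul_left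
  simp only [norm_sub_rev x]
  exact tendsto_nhds_unique
    ((tendsto_integral_plummerDensity_smul_helmholtzAmplitude_smul hφ.continuous hsupp ζ x).congr'
      (hparts.mono fun _ ↦ Eq.symm))
    (tendsto_integral_regularizedHelmholtzKernel_smul (by omega) hcont hcompact ζ x)

/-- For a smooth compactly supported `φ : ℝ³ → ℂ` and `ζ ∈ ℂ` with
`Im ζ > 0`, for every `x`,
`φ(x) = ∫ (e^{iζ|x-y|}/(4π|x-y|)) (-Δφ(y) - ζ² φ(y)) dy`. -/
theorem stmt10 (φ : EuclideanSpace ℝ (Fin 3) → ℂ) (hφ : ContDiff ℝ (⊤ : ℕ∞) φ)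
    (hsupp : HasCompactSupport φ) (ζ : ℂ) (hζ : 0 < ζ.im) :
    ∀ x : EuclideanSpace ℝ (Fin 3),
      φ x = ∫ y : EuclideanSpace ℝ (Fin 3),
        (Complex.exp (Complex.I * ζ * (‖x - y‖ : ℝ)) / ((4 * Real.pi * ‖x - y‖ : ℝ) : ℂ)) *
          (-laplacian3 φ y - ζ ^ 2 * φ y) := by
  have hφ₂ : ContDiff ℝ 2 φ := hφ.of_le (WithTop.coe_le_coe.2 le_top)
  rw [laplacian3_eq_laplacian hφ₂]
  exact stmt10_general finrank_euclideanSpace_fin hφ₂ hsupp ζ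
end
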